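/- Let H be as in the Setup (a connected {P,C}-free 3-graph on n vertices containing a copy of P_2 ∪ K_3, with U, W_0, W_1, H[U] and H_1 defined from a fixed such copy). If |W_1| ≥ 7, then |H[U]| + |H_1| ≤ 2|W_1| − 1. -/

import Mathlib

/-- A 3-graph: a finite vertex set together with a finite set of edges
(intended to be 3-element subsets of the vertex set). -/
structure ThreeGraph where
  verts : Finset ℕ
  edges : Finset (Finset ℕ)

namespace ThreeGraph

/-- `G` is a genuine 3-uniform hypergraph: every edge is a 3-element subset of the vertex set. -/
def IsValid (G : ThreeGraph) : Prop :=
  ∀ e ∈ G.edges, e.card = 3 ∧ e ⊆ G.verts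

/-- `H.ContainsCopy F` means `F ⊆ H`: there is an injective map of the vertices of `F`
into those of `H` carrying every edge of `F` to an edge of `H`. -/
def ContainsCopy (H F : ThreeGraph) : Prop :=
  ∃ f : ℕ → ℕ, Set.InjOn f ↑F.verts ∧ (∀ v ∈ F.verts, f v ∈ H.verts) ∧
    ∀ e ∈ F.edges, e.image f ∈ H.edges

/-- `H.Free F` : `H` contains no copy of `F`. -/
def Free (H F : ThreeGraph) : Prop := ¬ H.ContainsCopy F

/-- `IsoCopy F H` : `H` is isomorphic to `F`. -/
def IsoCopy (F H : ThreeGraph) : Prop :=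
  ∃ f : ℕ → ℕ, Set.InjOn f ↑F.verts ∧ F.verts.image f = H.verts ∧
    F.edges.image (Finset.image f) = H.edges

/-- Connectivity: any two vertices are joined by a sequence of vertices in which
consecutive ones lie in a common edge. -/
def Connected (G : ThreeGraph) : Prop :=
  ∀ u ∈ G.verts, ∀ v ∈ G.verts,
    Relation.ReflTransGen (fun a b => ∃ e ∈ G.edges, a ∈ e ∧ b ∈ e) u v

/-- Shift all vertices by `k`. -/
def shiftBy (G : ThreeGraph) (k : ℕ) : ThreeGraph :=
  ⟨G.verts.image (· + k), G.edges.image (Finset.image (· + k))⟩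

/-- Vertex-disjoint union of two 3-graphs. -/
def dUnion (G H : ThreeGraph) : ThreeGraph :=
  ⟨G.verts ∪ (H.shiftBy (G.verts.sup id + 1)).verts,
   G.edges ∪ (H.shiftBy (G.verts.sup id + 1)).edges⟩

end ThreeGraph

/-- The loose 3-uniform path of length 3. -/
def pathP : ThreeGraph :=
  ⟨{0,1,2,3,4,5,6}, {{0,1,2},{2,3,4},{4,5,6}}⟩

/-- The triangle `C`. -/
def triangleC : ThreeGraph :=
  ⟨{0,1,2,3,4,5}, {{0,1,2},{2,3,4},{4,5,0}}⟩

/-- The matching `M`: two disjoint edges. -/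
def matchingM : ThreeGraph :=
  ⟨{0,1,2,3,4,5}, {{0,1,2},{3,4,5}}⟩

/-- `P_2`: two edges sharing exactly one vertex. -/
def pairP2 : ThreeGraph :=
  ⟨{0,1,2,3,4}, {{0,1,2},{2,3,4}}⟩

/-- The complete 3-graph `K_n`. -/
def KK (n : ℕ) : ThreeGraph :=
  ⟨Finset.range n, (Finset.range n).powersetCard 3⟩

/-- The full star `S_n` with center `0`. -/
def SS (n : ℕ) : ThreeGraph :=
  ⟨Finset.range n, ((Finset.range n).powersetCard 3).filter (fun e => 0 ∈ e)⟩

/-- `G_1(n)` with `x,y,z,v = 0,1,2,3`. -/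
def G1 (n : ℕ) : ThreeGraph :=
  ⟨Finset.range n,
   insert {0,1,2}
     (((Finset.range n).powersetCard 3).filter
       (fun h => 3 ∈ h ∧ (h ∩ ({0,1,2} : Finset ℕ)).Nonempty))⟩

/-- `G_2(n)` with `x,y,z = 0,1,2`. -/
def G2 (n : ℕ) : ThreeGraph :=
  ⟨Finset.range n,
   insert {0,1,2}
     (((Finset.range n).powersetCard 3).filter
       (fun h => (h ∩ ({0,1,2} : Finset ℕ)).card = 2))⟩

/-- `G_3(n)` with `x,y₁,y₂,z₁,z₂ = 0,1,2,3,4`. -/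
def G3 (n : ℕ) : ThreeGraph :=
  ⟨Finset.range n,
   ((({0,1,2,3,4} : Finset ℕ).powersetCard 3) \ {{1,2,3},{1,2,4}}) ∪
     ((Finset.range n \ ({0,1,2,3,4} : Finset ℕ)).biUnion (fun w => {{0,3,w},{0,4,w}}))⟩

/-- `K_5^{+t}`: `K_5` on `{0,…,4}` with `a,b = 0,1` and `t` pendant edges `{0,1,v}`. -/
def K5plus (t : ℕ) : ThreeGraph :=
  ⟨Finset.range (5 + t),
   ((Finset.range 5).powersetCard 3) ∪ ((Finset.Ico 5 (5 + t)).image (fun v => {0,1,v}))⟩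

/-- The comet `Co(n)`: a `K_4` on `{0,1,2,3}` and a full star on `{0} ∪ {4,…,n-1}`
with center `0`. -/
def comet (n : ℕ) : ThreeGraph :=
  ⟨Finset.range n,
   (({0,1,2,3} : Finset ℕ).powersetCard 3) ∪
     (((insert 0 (Finset.Ico 4 n)).powersetCard 3).filter (fun e => 0 ∈ e))⟩

/-- `W = V(H) \ U`. -/
def Wset (H : ThreeGraph) (U : Finset ℕ) : Finset ℕ := H.verts \ U

/-- `W_0`: the vertices of `W` lying in no edge of `H` entirely contained in `W`. -/
def W0set (H : ThreeGraph) (U : Finset ℕ) : Finset ℕ :=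
  (Wset H U).filter (fun v => ∀ e ∈ H.edges, e ⊆ Wset H U → v ∉ e)

/-- `W_1 = W \ W_0`. -/
def W1set (H : ThreeGraph) (U : Finset ℕ) : Finset ℕ :=
  Wset H U \ W0set H U

/-- `H_1`: the edges of `H` meeting both `U` and `W_1`. -/
def H1set (H : ThreeGraph) (U : Finset ℕ) : Finset (Finset ℕ) :=
  H.edges.filter (fun e => (e ∩ U).Nonempty ∧ (e ∩ W1set H U).Nonempty)

/-- `H[U]`: the edges of `H` entirely contained in `U`. -/
def HUset (H : ThreeGraph) (U : Finset ℕ) : Finset (Finset ℕ) :=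
  H.edges.filter (fun e => e ⊆ U)

/-! Write `Q = {e, f}` with `e ∩ f = {x}`, and call an edge disjoint from `U = e ∪ f` inner; `W₁`
is the union of the inner edges. Freeness of `P` and `C` leaves two kinds of edges in `H₁`: those of
the form `(e \ {x}) ∪ {w}` or `(f \ {x}) ∪ {w}`, with `w` in a set `A` respectively `B`, and those
of the form `{x, w, q}`, where `q` lies on every inner edge through `w` and both `w, q` lie in
`S = W₁ \ (A ∪ B)`. Each vertex of `S` is thus on at most two edges `{x, w, q}`, so double counting
gives at most `|S|` of them.

If `A` and `B` are disjoint, then `|H₁| ≤ |A ∪ B| + |S| = |W₁|`, and `|H[U]| ≤ 6` unless `H₁` is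
empty: a vertex in `A` or in `B` leaves at most `4` edges in `U`, and an edge `{x, w, q}` forces all
edges in `U` through `x`. If some `w` is in `A ∩ B`, then `H[U] = {e, f}`, while the two other
vertices of an inner edge through `w` are in `S`, which improves the bound on `|H₁|` to
`2|W₁| - 3`. -/

section Triples

variable {α : Type*} [DecidableEq α] {s : Finset α} {a b c : α}

theorem eq_triple_of_card_eq_three (hs : s.card = 3) (ha : a ∈ s) (hb : b ∈ s) (hc : c ∈ s)
    (hab : a ≠ b) (hac : a ≠ c) (hbc : b ≠ c) : s = {a, b, c} := by
  refine (Finset.eq_of_subset_of_card_le (by grind) ?_).symm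
  rw [hs, Finset.card_eq_three.2 ⟨a, b, c, hab, hac, hbc, rfl⟩]

theorem exists_eq_triple_of_mem (hs : s.card = 3) (ha : a ∈ s) :
    ∃ b c, a ≠ b ∧ a ≠ c ∧ b ≠ c ∧ s = {a, b, c} := by
  obtain ⟨b, c, hbc, h⟩ := Finset.card_eq_two.1
    (show (s.erase a).card = 2 by rw [Finset.card_erase_of_mem ha, hs])
  have ha' : a ∉ ({b, c} : Finset α) := h ▸ Finset.notMem_erase a s
  exact ⟨b, c, by grind, by grind, hbc, by rw [← h, Finset.insert_erase ha]⟩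

theorem exists_eq_triple_of_mem_of_mem (hs : s.card = 3) (ha : a ∈ s) (hb : b ∈ s)
    (hab : a ≠ b) : ∃ c, c ≠ a ∧ c ≠ b ∧ s = {a, b, c} := by
  obtain ⟨c, d, hac, had, hcd, rfl⟩ := exists_eq_triple_of_mem hs ha
  rcases show b = c ∨ b = d by grind with rfl | rfl
  · exact ⟨d, had.symm, hcd.symm, rfl⟩
  · exact ⟨c, hac.symm, hcd, by grind⟩

theorem card_le_choose_of_erase_subset {T : Finset (Finset α)} {n : ℕ}
    (hT : ∀ t ∈ T, a ∈ t ∧ t.card = n + 1 ∧ t.erase a ⊆ s) : T.card ≤ s.card.choose n := by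
  have hsub : T ⊆ (s.powersetCard n).image (insert a) := by
    intro t ht
    obtain ⟨hat, hcard, hts⟩ := hT t ht
    refine Finset.mem_image.2 ⟨t.erase a, Finset.mem_powersetCard.2 ⟨hts, ?_⟩,
      Finset.insert_erase hat⟩
    rw [Finset.card_erase_of_mem hat, hcard, Nat.add_sub_cancel]
  calc T.card ≤ ((s.powersetCard n).image (insert a)).card := Finset.card_le_card hsub
    _ ≤ (s.powersetCard n).card := Finset.card_image_le
    _ = s.card.choose n := Finset.card_powersetCard _ _

end Triples

namespace ThreeGraph

variable {H F : ThreeGraph} {U e f g h k : Finset ℕ} {u v w x p q r : ℕ}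

theorem IsValid.containsCopy_of_nodup (hval : H.IsValid) {l : List ℕ} (hl : l.Nodup)
    (hFl : ∀ i ∈ F.verts, i < l.length) (hF : ∀ i ∈ F.verts, ∃ e ∈ F.edges, i ∈ e)
    (hedges : ∀ e ∈ F.edges, e.image (fun i => l.getD i 0) ∈ H.edges) : H.ContainsCopy F := by
  refine ⟨fun i => l.getD i 0, fun i hi j hj hij => ?_, fun i hi => ?_, hedges⟩
  · simp only [List.getD_eq_getElem _ _ (hFl i hi), List.getD_eq_getElem _ _ (hFl j hj)] at hij
    exact hl.getElem_inj_iff.1 hij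
  · obtain ⟨e, he, hie⟩ := hF i hi
    exact (hval _ (hedges e he)).2 (Finset.mem_image_of_mem _ hie)

theorem IsValid.containsCopy_pathP (hval : H.IsValid) (he : e ∈ H.edges) (hf : f ∈ H.edges)
    (hg : g ∈ H.edges) (hef : e ∩ f = {p}) (hfg : f ∩ g = {q}) (heg : Disjoint e g) :
    H.ContainsCopy pathP := by
  simp only [Finset.eq_singleton_iff_unique_mem, Finset.mem_inter] at hef hfg
  rw [Finset.disjoint_left] at heg
  obtain ⟨a, b, hpa, hpb, hab, rfl⟩ := exists_eq_triple_of_mem (hval e he).1 hef.1.1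
  obtain ⟨c, d, hqc, hqd, hcd, rfl⟩ := exists_eq_triple_of_mem (hval g hg).1 hfg.1.2
  obtain ⟨y, hyp, hyq, rfl⟩ := exists_eq_triple_of_mem_of_mem (hval f hf).1 hef.1.2 hfg.1.1
    (by grind)
  apply hval.containsCopy_of_nodup (l := [a, b, p, y, q, c, d])
  · simp only [Finset.mem_insert, Finset.mem_singleton, and_imp, forall_eq_or_imp, forall_eq]
      at heg hef hfg
    simp only [List.nodup_cons, List.mem_cons, List.not_mem_nil, List.nodup_nil]
    grind
  · simp [pathP]
  · simp [pathP]
  · have he' : ({a, b, p} : Finset ℕ) ∈ H.edges := by convert he using 1; grind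
    have hf' : ({p, y, q} : Finset ℕ) ∈ H.edges := by convert hf using 1; grind
    simpa [pathP, Finset.image_insert] using ⟨he', hf', hg⟩

theorem IsValid.containsCopy_triangleC (hval : H.IsValid) (he : e ∈ H.edges) (hf : f ∈ H.edges)
    (hg : g ∈ H.edges) (hef : e ∩ f = {p}) (hfg : f ∩ g = {q}) (hge : g ∩ e = {r})
    (hpg : p ∉ g) : H.ContainsCopy triangleC := by
  simp only [Finset.eq_singleton_iff_unique_mem, Finset.mem_inter] at hef hfg hge
  obtain ⟨a, har, hap, rfl⟩ := exists_eq_triple_of_mem_of_mem (hval e he).1 hge.1.2 hef.1.1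
    (by grind)
  obtain ⟨b, hbp, hbq, rfl⟩ := exists_eq_triple_of_mem_of_mem (hval f hf).1 hef.1.2 hfg.1.1
    (by grind)
  obtain ⟨c, hcq, hcr, rfl⟩ := exists_eq_triple_of_mem_of_mem (hval g hg).1 hfg.1.2 hge.1.1
    (by grind)
  apply hval.containsCopy_of_nodup (l := [r, a, p, b, q, c])
  · simp only [Finset.mem_insert, Finset.mem_singleton, and_imp, forall_eq_or_imp, forall_eq]
      at hef hfg hge hpg
    simp only [List.nodup_cons, List.mem_cons, List.not_mem_nil, List.nodup_nil]
    grind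
  · simp [triangleC]
  · simp [triangleC]
  · have he' : ({r, a, p} : Finset ℕ) ∈ H.edges := by convert he using 1; grind
    have hf' : ({p, b, q} : Finset ℕ) ∈ H.edges := by convert hf using 1; grind
    have hg' : ({q, c, r} : Finset ℕ) ∈ H.edges := by convert hg using 1; grind
    simpa [triangleC, Finset.image_insert] using ⟨he', hf', hg'⟩

theorem IsValid.mem_W1set_iff (hval : H.IsValid) :
    w ∈ W1set H U ↔ ∃ k ∈ H.edges, Disjoint k U ∧ w ∈ k := by
  have subset_Wset_iff {k} (hk : k ∈ H.edges) : k ⊆ Wset H U ↔ Disjoint k U := by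
    simp [Wset, Finset.subset_sdiff, (hval k hk).2]
  simp only [W1set, W0set, Finset.mem_sdiff, Finset.mem_filter, not_and, not_forall, not_not]
  constructor
  · rintro ⟨hw, h⟩
    obtain ⟨k, hk, hkW, hwk⟩ := h hw
    exact ⟨k, hk, (subset_Wset_iff hk).1 hkW, hwk⟩
  · rintro ⟨k, hk, hkU, hwk⟩
    have hkW := (subset_Wset_iff hk).2 hkU
    exact ⟨hkW hwk, fun _ => ⟨k, hk, hkW, hwk⟩⟩

/-- The edges `e` and `f` of `H` form a copy of `P_2` on the vertex set `U`, with common vertex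
`x`. -/
structure IsP2On (H : ThreeGraph) (U e f : Finset ℕ) (x : ℕ) : Prop where
  left_mem : e ∈ H.edges
  right_mem : f ∈ H.edges
  inter_eq : e ∩ f = {x}
  union_eq : e ∪ f = U

/-- The set of `w ∈ W₁` for which the pair `s` extends to the edge `s ∪ {w}`. With `s = e \ {x}` and
`s = f \ {x}` these are the sets `A` and `B` of the introduction. -/
def pairLink (H : ThreeGraph) (U s : Finset ℕ) : Finset ℕ :=
  (W1set H U).filter fun w => insert w s ∈ H.edges

/-- The edges of `H₁` through the vertex `x`. -/
def H1star (H : ThreeGraph) (U : Finset ℕ) (x : ℕ) : Finset (Finset ℕ) :=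
  (H1set H U).filter fun g => x ∈ g

theorem mem_edges_of_mem_H1star (hg : g ∈ H1star H U x) : g ∈ H.edges :=
  (Finset.mem_filter.1 (Finset.mem_filter.1 hg).1).1

theorem center_mem_of_mem_H1star (hg : g ∈ H1star H U x) : x ∈ g :=
  (Finset.mem_filter.1 hg).2

/-- The set `S = W₁ \ (A ∪ B)` of the introduction, which contains `g \ {x}` for all edges `g` of
`H₁` through `x`. -/
def unlinked (H : ThreeGraph) (U e f : Finset ℕ) (x : ℕ) : Finset ℕ :=
  W1set H U \ (pairLink H U (e.erase x) ∪ pairLink H U (f.erase x))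

theorem card_unlinked_add_card_union (H : ThreeGraph) (U e f : Finset ℕ) (x : ℕ) :
    (unlinked H U e f x).card + (pairLink H U (e.erase x) ∪ pairLink H U (f.erase x)).card =
      (W1set H U).card :=
  Finset.card_sdiff_add_card_eq_card
    (Finset.union_subset (Finset.filter_subset _ _) (Finset.filter_subset _ _))

namespace IsP2On

theorem symm (hQ : H.IsP2On U e f x) : H.IsP2On U f e x :=
  ⟨hQ.right_mem, hQ.left_mem, by rw [Finset.inter_comm, hQ.inter_eq],
    by rw [Finset.union_comm, hQ.union_eq]⟩

theorem center_mem_left (hQ : H.IsP2On U e f x) : x ∈ e :=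
  (Finset.mem_inter.1 (hQ.inter_eq.symm ▸ Finset.mem_singleton_self x)).1

theorem center_mem (hQ : H.IsP2On U e f x) : x ∈ U :=
  hQ.union_eq ▸ Finset.mem_union_left f hQ.center_mem_left

theorem mem_iff (hQ : H.IsP2On U e f x) : v ∈ U ↔ v ∈ e ∨ v ∈ f := by
  rw [← hQ.union_eq, Finset.mem_union]

theorem eq_center (hQ : H.IsP2On U e f x) (he : v ∈ e) (hf : v ∈ f) : v = x := by
  have : v ∈ e ∩ f := Finset.mem_inter.2 ⟨he, hf⟩
  simpa [hQ.inter_eq] using this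

theorem eq_insert_erase_of_center_notMem (hQ : H.IsP2On U e f x) (hval : H.IsValid)
    (hP : H.Free pathP) (hC : H.Free triangleC) (hg : g ∈ H.edges) (hxg : x ∉ g)
    (hwg : w ∈ g) (hwU : w ∉ U) (hug : u ∈ g) (hue : u ∈ e) : g = insert w (e.erase x) := by
  have hwef : w ∉ e ∧ w ∉ f := by grind [hQ.mem_iff]
  have hxe := hQ.center_mem_left
  have hgf : Disjoint g f := by
    by_contra hgf
    obtain ⟨v, hvg, hvf⟩ := Finset.not_disjoint_iff.1 hgf
    have hgeq := eq_triple_of_card_eq_three (hval g hg).1 hug hvg hwg (by grind [hQ.eq_center])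
      (by grind) (by grind)
    have hge : g ∩ e = {u} := by grind [hQ.eq_center]
    have hfg : f ∩ g = {v} := by grind [hQ.eq_center]
    exact hC (hval.containsCopy_triangleC hQ.left_mem hQ.right_mem hg hQ.inter_eq hfg hge hxg)
  have hge : g ∩ e ≠ {u} := fun h =>
    hP (hval.containsCopy_pathP hg hQ.left_mem hQ.right_mem h hQ.inter_eq hgf)
  obtain ⟨v, hvu, hvg, hve⟩ : ∃ v, v ≠ u ∧ v ∈ g ∧ v ∈ e := by grind
  have hgeq := eq_triple_of_card_eq_three (hval g hg).1 hug hvg hwg hvu.symm (by grind) (by grind)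
  have heeq := eq_triple_of_card_eq_three (hval e hQ.left_mem).1 hue hve hxe hvu.symm (by grind)
    (by grind)
  grind

theorem erase_center_subset_of_center_mem (hQ : H.IsP2On U e f x) (hval : H.IsValid)
    (hP : H.Free pathP) (hg : g ∈ H.edges) (hxg : x ∈ g) (hwg : w ∈ g) (hk : k ∈ H.edges)
    (hkU : Disjoint k U) (hwk : w ∈ k) : g.erase x ⊆ k := by
  intro u hu
  obtain ⟨hux, hug⟩ := Finset.mem_erase.1 hu
  by_contra huk
  wlog huf : u ∉ f generalizing e f
  · exact this hQ.symm (by grind [hQ.eq_center])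
  have hkU' {v} (hv : v ∈ U) : v ∉ k := fun hvk => Finset.disjoint_left.1 hkU hvk hv
  have hxf := hQ.symm.center_mem_left
  have hgeq := eq_triple_of_card_eq_three (hval g hg).1 hxg hwg hug (by grind [hQ.mem_iff]) hux.symm
    (by grind)
  have hkg : k ∩ g = {w} := by grind [hQ.mem_iff]
  have hgf : g ∩ f = {x} := by grind [hQ.mem_iff]
  have hkf : Disjoint k f := hkU.mono_right (by grind [hQ.mem_iff])
  exact hP (hval.containsCopy_pathP hk hg hQ.right_mem hkg hgf hkf)

theorem card_eq_five (hQ : H.IsP2On U e f x) (hval : H.IsValid) : U.card = 5 := by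
  have hcard := Finset.card_union_add_card_inter e f
  rw [hQ.union_eq, hQ.inter_eq, (hval e hQ.left_mem).1, (hval f hQ.right_mem).1,
    Finset.card_singleton] at hcard
  omega

theorem exists_inner_edge_of_mem_H1star (hQ : H.IsP2On U e f x) (hval : H.IsValid)
    (hP : H.Free pathP) (hg : g ∈ H1star H U x) :
    ∃ k ∈ H.edges, Disjoint k U ∧ g.erase x ⊆ k := by
  obtain ⟨hgH1, hxg⟩ := Finset.mem_filter.1 hg
  obtain ⟨hgH, -, w, hw⟩ := Finset.mem_filter.1 hgH1
  obtain ⟨hwg, hwW⟩ := Finset.mem_inter.1 hw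
  obtain ⟨k, hk, hkU, hwk⟩ := hval.mem_W1set_iff.1 hwW
  exact ⟨k, hk, hkU, hQ.erase_center_subset_of_center_mem hval hP hgH hxg hwg hk hkU hwk⟩

theorem erase_center_subset_unlinked (hQ : H.IsP2On U e f x) (hval : H.IsValid)
    (hP : H.Free pathP) (hg : g ∈ H1star H U x) : g.erase x ⊆ unlinked H U e f x := by
  have hgH := mem_edges_of_mem_H1star hg
  have hxg := center_mem_of_mem_H1star hg
  obtain ⟨k, hk, hkU, hgk⟩ := hQ.exists_inner_edge_of_mem_H1star hval hP hg
  have hgU {v} (hv : v ∈ g) (hvU : v ∈ U) : v = x := by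
    by_contra hvx
    exact Finset.disjoint_left.1 hkU (hgk (Finset.mem_erase.2 ⟨hvx, hv⟩)) hvU
  have notMem_pairLink {e f} (hQ : H.IsP2On U e f x) {v} (hv : v ∈ g.erase x) :
      v ∉ pairLink H U (e.erase x) := by
    intro hve
    have hh := (Finset.mem_filter.1 hve).2
    have hxf := hQ.symm.center_mem_left
    have hvU : v ∉ U := Finset.disjoint_left.1 hkU (hgk hv)
    have hhg : insert v (e.erase x) ∩ g = {v} := by grind [hQ.mem_iff]
    have hgf : g ∩ f = {x} := by grind [hQ.mem_iff]
    have hhf : Disjoint (insert v (e.erase x)) f := by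
      rw [Finset.disjoint_left]
      grind [hQ.mem_iff, hQ.eq_center]
    exact hP (hval.containsCopy_pathP hh hgH hQ.right_mem hhg hgf hhf)
  intro v hv
  rw [unlinked, Finset.mem_sdiff, Finset.mem_union, not_or]
  exact ⟨hval.mem_W1set_iff.2 ⟨k, hk, hkU, hgk hv⟩, notMem_pairLink hQ hv,
    notMem_pairLink hQ.symm hv⟩

theorem card_H1set_le (hQ : H.IsP2On U e f x) (hval : H.IsValid) (hP : H.Free pathP)
    (hC : H.Free triangleC) : (H1set H U).card ≤
      (pairLink H U (e.erase x)).card + (pairLink H U (f.erase x)).card +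
        (H1star H U x).card := by
  have hcover : H1set H U ⊆ (pairLink H U (e.erase x)).image (fun w => insert w (e.erase x)) ∪
      (pairLink H U (f.erase x)).image (fun w => insert w (f.erase x)) ∪ H1star H U x := by
    intro g hg
    obtain ⟨hgH, ⟨u, hu⟩, w, hw⟩ := Finset.mem_filter.1 hg
    obtain ⟨hug, huU⟩ := Finset.mem_inter.1 hu
    obtain ⟨hwg, hwW⟩ := Finset.mem_inter.1 hw
    have hwU : w ∉ U := (Finset.mem_sdiff.1 (Finset.mem_sdiff.1 hwW).1).2
    simp only [Finset.mem_union, Finset.mem_image, pairLink, H1star, Finset.mem_filter]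
    by_cases hxg : x ∈ g
    · exact Or.inr ⟨hg, hxg⟩
    rcases hQ.mem_iff.1 huU with hue | huf
    · have hgw := hQ.eq_insert_erase_of_center_notMem hval hP hC hgH hxg hwg hwU hug hue
      exact Or.inl (Or.inl ⟨w, ⟨hwW, hgw ▸ hgH⟩, hgw.symm⟩)
    · have hgw := hQ.symm.eq_insert_erase_of_center_notMem hval hP hC hgH hxg hwg hwU hug huf
      exact Or.inl (Or.inr ⟨w, ⟨hwW, hgw ▸ hgH⟩, hgw.symm⟩)
  refine (Finset.card_le_card hcover).trans ((Finset.card_union_le _ _).trans ?_)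
  gcongr
  refine (Finset.card_union_le _ _).trans ?_
  gcongr <;> exact Finset.card_image_le

theorem card_H1star_le_choose (hQ : H.IsP2On U e f x) (hval : H.IsValid) (hP : H.Free pathP) :
    (H1star H U x).card ≤ (unlinked H U e f x).card.choose 2 :=
  card_le_choose_of_erase_subset fun _ hg =>
    ⟨center_mem_of_mem_H1star hg, (hval _ (mem_edges_of_mem_H1star hg)).1,
      hQ.erase_center_subset_unlinked hval hP hg⟩

theorem card_H1star_filter_mem_le_two (hQ : H.IsP2On U e f x) (hval : H.IsValid)
    (hP : H.Free pathP) (hw : w ∈ W1set H U) : ((H1star H U x).filter (w ∈ ·)).card ≤ 2 := by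
  obtain ⟨k, hk, hkU, hwk⟩ := hval.mem_W1set_iff.1 hw
  have hwx : w ≠ x := fun hwx => Finset.disjoint_left.1 hkU hwk (hwx ▸ hQ.center_mem)
  have hsub : (H1star H U x).filter (w ∈ ·) ⊆ (k.erase w).image (fun v => {x, w, v}) := by
    intro g hg
    obtain ⟨hg, hwg⟩ := Finset.mem_filter.1 hg
    have hgH := mem_edges_of_mem_H1star hg
    have hxg := center_mem_of_mem_H1star hg
    have hgk := hQ.erase_center_subset_of_center_mem hval hP hgH hxg hwg hk hkU hwk
    obtain ⟨v, hvx, hvw, rfl⟩ :=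
      exists_eq_triple_of_mem_of_mem (hval g hgH).1 hxg hwg hwx.symm
    exact Finset.mem_image.2 ⟨v, Finset.mem_erase.2 ⟨hvw, hgk (by grind)⟩, rfl⟩
  calc ((H1star H U x).filter (w ∈ ·)).card
      ≤ ((k.erase w).image fun v => ({x, w, v} : Finset ℕ)).card := Finset.card_le_card hsub
    _ ≤ (k.erase w).card := Finset.card_image_le
    _ = 2 := by rw [Finset.card_erase_of_mem hwk, (hval k hk).1]

theorem card_H1star_le (hQ : H.IsP2On U e f x) (hval : H.IsValid) (hP : H.Free pathP) :
    (H1star H U x).card ≤ (unlinked H U e f x).card := by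
  refine Nat.le_of_mul_le_mul_right (Finset.card_mul_le_card_mul (fun g w => w ∈ g) ?_ ?_)
    (Nat.zero_lt_two)
  · intro g hg
    have hxg := center_mem_of_mem_H1star hg
    have hgH := mem_edges_of_mem_H1star hg
    have hcard : (g.erase x).card = 2 := by rw [Finset.card_erase_of_mem hxg, (hval g hgH).1]
    rw [← hcard]
    refine Finset.card_le_card fun w hw => Finset.mem_filter.2 ⟨?_, Finset.mem_of_mem_erase hw⟩
    exact hQ.erase_center_subset_unlinked hval hP hg hw
  · intro w hw
    exact hQ.card_H1star_filter_mem_le_two hval hP (Finset.mem_sdiff.1 hw).1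

theorem erase_subset_or_eq_of_mem_pairLink (hQ : H.IsP2On U e f x) (hval : H.IsValid)
    (hP : H.Free pathP) (hw : w ∈ pairLink H U (e.erase x)) (hg : g ∈ HUset H U) :
    e.erase x ⊆ g ∨ g = f := by
  obtain ⟨hwW, hh⟩ := Finset.mem_filter.1 hw
  obtain ⟨hgH, hgU⟩ := Finset.mem_filter.1 hg
  obtain ⟨k, hk, hkU, hwk⟩ := hval.mem_W1set_iff.1 hwW
  have hkU' {v} (hv : v ∈ U) : v ∉ k := fun hvk => Finset.disjoint_left.1 hkU hvk hv
  refine or_iff_not_imp_left.2 fun heg => ?_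
  obtain ⟨u, hu, hug⟩ := Finset.not_subset.1 heg
  have hge (v) (hve : v ∈ e.erase x) : v ∉ g := by
    intro hvg
    have he := eq_triple_of_card_eq_three (hval e hQ.left_mem).1 hQ.center_mem_left
      (Finset.mem_of_mem_erase hu) (Finset.mem_of_mem_erase hve) (by grind) (by grind) (by grind)
    have hkh : k ∩ insert w (e.erase x) = {w} := by grind [hQ.mem_iff]
    have hhg : insert w (e.erase x) ∩ g = {v} := by grind
    exact hP (hval.containsCopy_pathP hk hh hgH hkh hhg (hkU.mono_right hgU))
  refine Finset.eq_of_subset_of_card_le (fun v hv => ?_) ?_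
  · have hxf := hQ.symm.center_mem_left
    grind [hQ.mem_iff.1 (hgU hv)]
  · rw [(hval f hQ.right_mem).1, (hval g hgH).1]

theorem card_HUset_le_ten (hQ : H.IsP2On U e f x) (hval : H.IsValid) :
    (HUset H U).card ≤ 10 := by
  have hsub : HUset H U ⊆ U.powersetCard 3 := fun g hg =>
    have hg := Finset.mem_filter.1 hg
    Finset.mem_powersetCard.2 ⟨hg.2, (hval g hg.1).1⟩
  calc (HUset H U).card ≤ (U.powersetCard 3).card := Finset.card_le_card hsub
    _ = U.card.choose 3 := Finset.card_powersetCard _ _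
    _ = 10 := by rw [hQ.card_eq_five hval]; rfl

theorem card_HUset_le_four (hQ : H.IsP2On U e f x) (hval : H.IsValid) (hP : H.Free pathP)
    (hA : (pairLink H U (e.erase x)).Nonempty) : (HUset H U).card ≤ 4 := by
  obtain ⟨w, hw⟩ := hA
  have hsub : HUset H U ⊆ insert f (f.image fun u => insert u (e.erase x)) := by
    intro g hg
    obtain ⟨hgH, hgU⟩ := Finset.mem_filter.1 hg
    refine Finset.mem_insert.2 ?_
    refine (hQ.erase_subset_or_eq_of_mem_pairLink hval hP hw hg).symm.imp_right fun heg => ?_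
    have hcard : (g \ e.erase x).card = 1 := by
      rw [Finset.card_sdiff_of_subset heg, Finset.card_erase_of_mem hQ.center_mem_left,
        (hval g hgH).1, (hval e hQ.left_mem).1]
    obtain ⟨u, hu⟩ := Finset.card_eq_one.1 hcard
    have hug : u ∈ g \ e.erase x := hu ▸ Finset.mem_singleton_self u
    refine Finset.mem_image.2 ⟨u, ?_, ?_⟩
    · have hxf := hQ.symm.center_mem_left
      grind [hQ.mem_iff]
    · rw [← Finset.sdiff_union_of_subset heg, hu, Finset.insert_eq]
  calc (HUset H U).card
      ≤ (insert f (f.image fun u => insert u (e.erase x))).card := Finset.card_le_card hsub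
    _ ≤ (f.image fun u => insert u (e.erase x)).card + 1 := Finset.card_insert_le _ _
    _ ≤ f.card + 1 := by gcongr; exact Finset.card_image_le
    _ = 4 := by rw [(hval f hQ.right_mem).1]

theorem card_HUset_le_two (hQ : H.IsP2On U e f x) (hval : H.IsValid) (hP : H.Free pathP)
    (hA : (pairLink H U (e.erase x)).Nonempty) (hB : (pairLink H U (f.erase x)).Nonempty) :
    (HUset H U).card ≤ 2 := by
  obtain ⟨w, hw⟩ := hA
  obtain ⟨w', hw'⟩ := hB
  have hsub : HUset H U ⊆ {e, f} := by
    intro g hg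
    rw [Finset.mem_insert, Finset.mem_singleton]
    rcases hQ.erase_subset_or_eq_of_mem_pairLink hval hP hw hg with heg | hgf
    swap
    · exact Or.inr hgf
    rcases hQ.symm.erase_subset_or_eq_of_mem_pairLink hval hP hw' hg with hfg | hge
    swap
    · exact Or.inl hge
    have hdisj : Disjoint (e.erase x) (f.erase x) := by
      rw [Finset.disjoint_left]
      grind [hQ.eq_center]
    have hcard := Finset.card_le_card (Finset.union_subset heg hfg)
    rw [Finset.card_union_of_disjoint hdisj, Finset.card_erase_of_mem hQ.center_mem_left,
      Finset.card_erase_of_mem hQ.symm.center_mem_left, (hval e hQ.left_mem).1,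
      (hval f hQ.right_mem).1, (hval g (Finset.mem_filter.1 hg).1).1] at hcard
    omega
  exact (Finset.card_le_card hsub).trans Finset.card_le_two

theorem two_le_card_inter_right (hQ : H.IsP2On U e f x) (hval : H.IsValid) (hP : H.Free pathP)
    (hX : (H1star H U x).Nonempty) (hg : g ∈ HUset H U) (hxg : x ∉ g) : 2 ≤ (g ∩ f).card := by
  obtain ⟨h, hh⟩ := hX
  obtain ⟨hgH, hgU⟩ := Finset.mem_filter.1 hg
  obtain ⟨k, -, hkU, hhk⟩ := hQ.exists_inner_edge_of_mem_H1star hval hP hh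
  have hxh := center_mem_of_mem_H1star hh
  have hhU {v} (hvh : v ∈ h) (hvU : v ∈ U) : v = x := by
    by_contra hvx
    exact Finset.disjoint_left.1 hkU (hhk (Finset.mem_erase.2 ⟨hvx, hvh⟩)) hvU
  have hne_zero : (g ∩ f).card ≠ 0 := by
    intro hzero
    rw [Finset.card_eq_zero, ← Finset.disjoint_iff_inter_eq_empty, Finset.disjoint_left] at hzero
    have hge : g = e := by
      refine Finset.eq_of_subset_of_card_le (fun v hv => ?_) ?_
      · exact (hQ.mem_iff.1 (hgU hv)).resolve_right (hzero hv)
      · rw [(hval e hQ.left_mem).1, (hval g hgH).1]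
    exact hxg (hge ▸ hQ.center_mem_left)
  have hne_one : (g ∩ f).card ≠ 1 := by
    intro hone
    obtain ⟨v, hv⟩ := Finset.card_eq_one.1 hone
    have hxf := hQ.symm.center_mem_left
    have hhf : h ∩ f = {x} := by grind [hQ.mem_iff]
    have hhg : Disjoint h g := by
      rw [Finset.disjoint_left]
      grind
    exact hP (hval.containsCopy_pathP (mem_edges_of_mem_H1star hh) hQ.right_mem hgH hhf
      (Finset.inter_comm g f ▸ hv) hhg)
  omega

theorem center_mem_of_mem_HUset (hQ : H.IsP2On U e f x) (hval : H.IsValid)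
    (hP : H.Free pathP) (hX : (H1star H U x).Nonempty) (hg : g ∈ HUset H U) : x ∈ g := by
  obtain ⟨hgH, hgU⟩ := Finset.mem_filter.1 hg
  by_contra hxg
  have hgf := hQ.two_le_card_inter_right hval hP hX hg hxg
  have hge := hQ.symm.two_le_card_inter_right hval hP hX hg hxg
  have hdisj : Disjoint (g ∩ e) (g ∩ f) := by
    rw [Finset.disjoint_left]
    grind [hQ.eq_center]
  have hcard : (g ∩ e).card + (g ∩ f).card = 3 := by
    rw [← Finset.card_union_of_disjoint hdisj, ← Finset.inter_union_distrib_left, hQ.union_eq,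
      Finset.inter_eq_left.2 hgU, (hval g hgH).1]
  omega

theorem card_HUset_le_six_of_H1star_nonempty (hQ : H.IsP2On U e f x) (hval : H.IsValid)
    (hP : H.Free pathP) (hX : (H1star H U x).Nonempty) : (HUset H U).card ≤ 6 := by
  calc (HUset H U).card ≤ (U.erase x).card.choose 2 :=
        card_le_choose_of_erase_subset fun g hg =>
          have ⟨hgH, hgU⟩ := Finset.mem_filter.1 hg
          ⟨hQ.center_mem_of_mem_HUset hval hP hX hg, (hval g hgH).1,
            Finset.erase_subset_erase x hgU⟩
    _ = 6 := by rw [Finset.card_erase_of_mem hQ.center_mem, hQ.card_eq_five hval]; rfl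

theorem card_HUset_le_six_of_H1set_nonempty (hQ : H.IsP2On U e f x) (hval : H.IsValid)
    (hP : H.Free pathP) (hC : H.Free triangleC) (hH1 : (H1set H U).Nonempty) :
    (HUset H U).card ≤ 6 := by
  have hpos := hH1.card_pos.trans_le (hQ.card_H1set_le hval hP hC)
  rcases (pairLink H U (e.erase x)).eq_empty_or_nonempty with hA | hA
  · rcases (pairLink H U (f.erase x)).eq_empty_or_nonempty with hB | hB
    · rw [hA, hB, Finset.card_empty, zero_add, zero_add, Finset.card_pos] at hpos
      exact hQ.card_HUset_le_six_of_H1star_nonempty hval hP hpos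
    · exact (hQ.symm.card_HUset_le_four hval hP hB).trans (by norm_num)
  · exact (hQ.card_HUset_le_four hval hP hA).trans (by norm_num)

theorem card_H1set_le_of_disjoint (hQ : H.IsP2On U e f x) (hval : H.IsValid)
    (hP : H.Free pathP) (hC : H.Free triangleC)
    (hAB : Disjoint (pairLink H U (e.erase x)) (pairLink H U (f.erase x))) :
    (H1set H U).card ≤ (W1set H U).card := by
  have hH1 := hQ.card_H1set_le hval hP hC
  have hX := hQ.card_H1star_le hval hP
  have hS := card_unlinked_add_card_union H U e f x
  rw [Finset.card_union_of_disjoint hAB] at hS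
  omega

theorem notMem_pairLink_right (hQ : H.IsP2On U e f x) (hval : H.IsValid) (hP : H.Free pathP)
    (hk : k ∈ H.edges) (hkU : Disjoint k U) (hvk : v ∈ k) (hwk : w ∈ k) (hvw : v ≠ w)
    (hw : w ∈ pairLink H U (e.erase x)) : v ∉ pairLink H U (f.erase x) := by
  intro hv
  have hkU' {u} (hu : u ∈ U) : u ∉ k := fun huk => Finset.disjoint_left.1 hkU huk hu
  have hek : insert w (e.erase x) ∩ k = {w} := by grind [hQ.mem_iff]
  have hkf : k ∩ insert v (f.erase x) = {v} := by grind [hQ.mem_iff]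
  have hef : Disjoint (insert w (e.erase x)) (insert v (f.erase x)) := by
    rw [Finset.disjoint_left]
    grind [hQ.mem_iff, hQ.eq_center]
  exact hP (hval.containsCopy_pathP (Finset.mem_filter.1 hw).2 hk (Finset.mem_filter.1 hv).2
    hek hkf hef)

theorem two_le_card_unlinked (hQ : H.IsP2On U e f x) (hval : H.IsValid) (hP : H.Free pathP)
    (hwA : w ∈ pairLink H U (e.erase x)) (hwB : w ∈ pairLink H U (f.erase x)) :
    2 ≤ (unlinked H U e f x).card := by
  obtain ⟨k, hk, hkU, hwk⟩ := hval.mem_W1set_iff.1 (Finset.mem_filter.1 hwA).1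
  have hsub : k.erase w ⊆ unlinked H U e f x := by
    intro v hv
    obtain ⟨hvw, hvk⟩ := Finset.mem_erase.1 hv
    rw [unlinked, Finset.mem_sdiff, Finset.mem_union, not_or]
    exact ⟨hval.mem_W1set_iff.2 ⟨k, hk, hkU, hvk⟩,
      hQ.symm.notMem_pairLink_right hval hP hk hkU hvk hwk hvw hwB,
      hQ.notMem_pairLink_right hval hP hk hkU hvk hwk hvw hwA⟩
  calc 2 = (k.erase w).card := by rw [Finset.card_erase_of_mem hwk, (hval k hk).1]
    _ ≤ (unlinked H U e f x).card := Finset.card_le_card hsub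

theorem card_H1set_add_three_le (hQ : H.IsP2On U e f x) (hval : H.IsValid)
    (hP : H.Free pathP) (hC : H.Free triangleC)
    (hwA : w ∈ pairLink H U (e.erase x)) (hwB : w ∈ pairLink H U (f.erase x)) :
    (H1set H U).card + 3 ≤ 2 * (W1set H U).card := by
  have hH1 := hQ.card_H1set_le hval hP hC
  have hX := hQ.card_H1star_le hval hP
  have hS := card_unlinked_add_card_union H U e f x
  have hA := Finset.card_le_card (Finset.subset_union_left (s₁ := pairLink H U (e.erase x))
    (s₂ := pairLink H U (f.erase x)))
  have hB := Finset.card_le_card (Finset.subset_union_right (s₁ := pairLink H U (e.erase x))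
    (s₂ := pairLink H U (f.erase x)))
  rcases (hQ.two_le_card_unlinked hval hP hwA hwB).eq_or_lt with htwo | hthree
  · have hone : (H1star H U x).card ≤ 1 := by
      simpa [← htwo] using hQ.card_H1star_le_choose hval hP
    omega
  · omega

end IsP2On

end ThreeGraph

theorem fact_HU_H1_bound_general {H : ThreeGraph} {U e f : Finset ℕ} {x : ℕ}
    (hval : H.IsValid) (hP : H.Free pathP) (hC : H.Free triangleC)
    (hQ : H.IsP2On U e f x) (hW1 : 7 ≤ (W1set H U).card) :
    (HUset H U).card + (H1set H U).card ≤ 2 * (W1set H U).card - 1 := by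
  by_cases hAB : Disjoint (H.pairLink U (e.erase x)) (H.pairLink U (f.erase x))
  · have hH1 := hQ.card_H1set_le_of_disjoint hval hP hC hAB
    rcases (H1set H U).eq_empty_or_nonempty with hempty | hnonempty
    · have hHU := hQ.card_HUset_le_ten hval
      rw [hempty, Finset.card_empty]
      omega
    · have hHU := hQ.card_HUset_le_six_of_H1set_nonempty hval hP hC hnonempty
      omega
  · obtain ⟨w, hwA, hwB⟩ := Finset.not_disjoint_iff.1 hAB
    have hHU := hQ.card_HUset_le_two hval hP ⟨w, hwA⟩ ⟨w, hwB⟩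
    have hH1 := hQ.card_H1set_add_three_le hval hP hC hwA hwB
    omega

/-- Inequality (12) of the paper: in the Setup, if `|W₁| ≥ 7` then
`|H[U]| + |H₁| ≤ 2|W₁| - 1`. -/
theorem fact_HU_H1_bound (n : ℕ) (H : ThreeGraph)
    (u0 u1 u2 u3 u4 : ℕ) (t : Finset ℕ)
    (hval : H.IsValid) (hcard : H.verts.card = n) (hconn : H.Connected)
    (hP : H.Free pathP) (hC : H.Free triangleC)
    (hdist : List.Pairwise (· ≠ ·) [u0, u1, u2, u3, u4])
    (he1 : ({u0, u1, u2} : Finset ℕ) ∈ H.edges)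
    (he2 : ({u2, u3, u4} : Finset ℕ) ∈ H.edges)
    (ht : t ∈ H.edges) (htdisj : Disjoint t ({u0, u1, u2, u3, u4} : Finset ℕ))
    (hW1 : 7 ≤ (W1set H {u0, u1, u2, u3, u4}).card) :
    (HUset H {u0, u1, u2, u3, u4}).card + (H1set H {u0, u1, u2, u3, u4}).card ≤
      2 * (W1set H {u0, u1, u2, u3, u4}).card - 1 := by
  have hQ : H.IsP2On {u0, u1, u2, u3, u4} {u0, u1, u2} {u2, u3, u4} u2 :=
    ⟨he1, he2, by grind [List.pairwise_cons], by grind⟩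
  exact fact_HU_H1_bound_general hval hP hC hQ hW1
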